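/- arXiv:2208.00643 — 2 statements merged into one kernel-verified Lean document; each statement's English description precedes it below -/
import Mathlib

section
/- Under the definitions below, for every k the SINR of the private stream at user k defined from the quantized received signal after successive interference cancellation of the common stream, γ_k^{orig} = P α_{ADC,k}² |h_k^H Φ_α f_k|² / (P α_{ADC,k}² Σ_{i=1, i≠k}^K |h_k^H Φ_α f_i|² + QE_k + α_{ADC,k}² σ²), equals the reformulated expression γ_k(F) = α_{ADC,k} |h_k^H Φ_α f_k|² / (Σ_{i=0}^K |h_k^H Φ_α f_i|² − α_{ADC,k}(|h_k^H Φ_α f_k|² + |h_k^H Φ_α f_0|²) + Σ_{i=0}^K f_i^H Φ_α Φ_β diag(h_k h_k^H) f_i + σ²/P). -/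
open Matrix

/-- `diagOf M` is the diagonal matrix whose diagonal coincides with that of `M`. -/
def diagOf {N : ℕ} (M : Matrix (Fin N) (Fin N) ℂ) : Matrix (Fin N) (Fin N) ℂ :=
  Matrix.diagonal fun n => M n n

/-- `outer u = u uᴴ`. -/
def outer {N : ℕ} (u : Fin N → ℂ) : Matrix (Fin N) (Fin N) ℂ :=
  Matrix.vecMulVec u (star u)

/-!
For a diagonal matrix `D`, the form `uᴴ D diag(v vᴴ) u = ∑ n, D n n * |v n|² * |u n|²` is symmetric
in `u` and `v`. Summing over the columns `v` of `F` moves the channel inside `diag` and the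
precoders outside, so the DAC error becomes a sum over the streams. Because
`α² + α (1 - α) = α`, the DAC error, the noise and the gain of every interfering stream enter the
SINR denominator with weight `α`. The decoded common stream and the private stream itself enter
only through the ADC error, with weight `α (1 - α)`: this is the correction subtracted in the
reformulation. The common factor `α P` then cancels against the numerator.
-/

section QuadraticForms

variable {m n R : Type*} [Fintype n]

theorem mul_conjTranspose_eq_sum_vecMulVec_col [NonUnitalNonAssocSemiring R] [Star R]
    (A : Matrix m n R) : A * Aᴴ = ∑ i, vecMulVec (A.col i) (star (A.col i)) := by
  ext j k
  simp [mul_apply, Matrix.sum_apply, vecMulVec_apply]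

variable [Fintype m]

theorem star_dotProduct_mul_conjTranspose_mulVec [NonUnitalSemiring R] [StarRing R]
    (A : Matrix m n R) (u : m → R) :
    star u ⬝ᵥ (A * Aᴴ) *ᵥ u = star u ᵥ* A ⬝ᵥ star (star u ᵥ* A) := by
  rw [← mulVec_mulVec, dotProduct_mulVec, mulVec_conjTranspose]

theorem star_dotProduct_mul_conjTranspose_mulVec_eq_sum_normSq (A : Matrix m n ℂ) (u : m → ℂ) :
    star u ⬝ᵥ (A * Aᴴ) *ᵥ u = ((∑ i, Complex.normSq (star u ⬝ᵥ A.col i) : ℝ) : ℂ) := by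
  rw [star_dotProduct_mul_conjTranspose_mulVec, Complex.ofReal_sum]
  exact Finset.sum_congr rfl fun i _ => Complex.mul_conj _

variable [DecidableEq m] [CommSemiring R] [Star R]

theorem star_dotProduct_mul_diagonal_diag_vecMulVec_comm {D : Matrix m m R} (hD : D.IsDiag)
    (u v : m → R) :
    star u ⬝ᵥ (D * diagonal (vecMulVec v (star v)).diag) *ᵥ u =
      star v ⬝ᵥ (D * diagonal (vecMulVec u (star u)).diag) *ᵥ v := by
  rw [← hD.diagonal_diag]
  simp only [diagonal_mul_diagonal, dotProduct, mulVec_diagonal, diag_apply, vecMulVec_apply]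
  exact Finset.sum_congr rfl fun i _ => by ring

theorem star_dotProduct_mul_diagonal_diag_mul_conjTranspose_mulVec {D : Matrix m m R}
    (hD : D.IsDiag) (A : Matrix m n R) (u : m → R) :
    star u ⬝ᵥ (D * diagonal (A * Aᴴ).diag) *ᵥ u =
      ∑ i, star (A.col i) ⬝ᵥ (D * diagonal (vecMulVec u (star u)).diag) *ᵥ A.col i := by
  have diagonal_diag_sum : diagonal (A * Aᴴ).diag =
      ∑ i, diagonal (vecMulVec (A.col i) (star (A.col i))).diag := by
    rw [mul_conjTranspose_eq_sum_vecMulVec_col, diag_sum]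
    exact map_sum (diagonalAddMonoidHom m R) _ _
  rw [diagonal_diag_sum, Finset.mul_sum, sum_mulVec, dotProduct_sum]
  exact Finset.sum_congr rfl fun i _ =>
    star_dotProduct_mul_diagonal_diag_vecMulVec_comm hD u (A.col i)

end QuadraticForms

theorem isDiag_mul {n R : Type*} [Fintype n] [NonUnitalNonAssocSemiring R] {A B : Matrix n n R}
    (hA : A.IsDiag) (hB : B.IsDiag) : (A * B).IsDiag := by
  classical
  rw [← hA.diagonal_diag, ← hB.diagonal_diag, diagonal_mul_diagonal]
  exact isDiag_diagonal _

theorem sum_erase_succ_eq_sum_compl {M : Type*} [AddCommMonoid M] {K : ℕ} (g : Fin (K + 1) → M)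
    (k : Fin K) :
    ∑ i ∈ Finset.univ.erase k, g i.succ = ∑ i ∈ ({0, k.succ} : Finset (Fin (K + 1)))ᶜ, g i := by
  have image_succ : (Finset.univ.erase k).map (Fin.succEmb K) = {0, k.succ}ᶜ := by
    ext i
    cases i using Fin.cases <;> simp
  rw [← image_succ, Finset.sum_map]
  rfl

section QuantizedReception

variable {ι S : Type*} [Fintype ι] [Fintype S]

/-- The power gain `|hᴴ Φα f|²` of the precoder `f` over the channel `h`, with DAC gains `Φα`. -/
noncomputable def streamGain (Φα : Matrix ι ι ℂ) (h f : ι → ℂ) : ℝ :=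
  Complex.normSq (star h ⬝ᵥ Φα *ᵥ f)

variable [DecidableEq ι]

/-- The covariance `R_qDAC = Φα Φβ diag(P F Fᴴ)` of the DAC quantization error, for a precoder
whose columns are the streams. -/
noncomputable def dacErrorCov (P : ℝ) (Φα Φβ : Matrix ι ι ℂ) (F : Matrix ι S ℂ) : Matrix ι ι ℂ :=
  Φα * Φβ * diagonal ((P : ℂ) • (F * Fᴴ)).diag

/-- The covariance `C_x` of the transmitted signal, DAC quantization error included. -/
noncomputable def transmitCov (P : ℝ) (Φα Φβ : Matrix ι ι ℂ) (F : Matrix ι S ℂ) : Matrix ι ι ℂ :=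
  (P : ℂ) • (Φα * F * Fᴴ * Φαᴴ) + dacErrorCov P Φα Φβ F

/-- The power `hᴴ Φα Φβ diag(f fᴴ) h` of the DAC quantization error caused by the precoder `f`, in
the form `fᴴ Φα Φβ diag(h hᴴ) f` of the reformulated SINR; the two agree when `Φα Φβ` is diagonal.
It is complex-valued because `Φα` and `Φβ` are. -/
noncomputable def dacErrorGain (Φα Φβ : Matrix ι ι ℂ) (h f : ι → ℂ) : ℂ :=
  star f ⬝ᵥ (Φα * Φβ * diagonal (vecMulVec h (star h)).diag) *ᵥ f

/-- The power `r_qADC` of the ADC quantization error of a user with channel `h`, noise power `σ2`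
and ADC gain `α`. -/
noncomputable def adcErrorPower (P : ℝ) (Φα Φβ : Matrix ι ι ℂ) (F : Matrix ι S ℂ) (h : ι → ℂ)
    (α σ2 : ℝ) : ℂ :=
  ((α * (1 - α) : ℝ) : ℂ) * (star h ⬝ᵥ transmitCov P Φα Φβ F *ᵥ h + (σ2 : ℂ))

/-- The total quantization error power `QE` in the received signal of a user with channel `h`. -/
noncomputable def quantErrorPower (P : ℝ) (Φα Φβ : Matrix ι ι ℂ) (F : Matrix ι S ℂ) (h : ι → ℂ)
    (α σ2 : ℝ) : ℂ :=
  ((α ^ 2 : ℝ) : ℂ) * (star h ⬝ᵥ dacErrorCov P Φα Φβ F *ᵥ h) + adcErrorPower P Φα Φβ F h α σ2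

variable (P : ℝ) {Φα Φβ : Matrix ι ι ℂ} (F : Matrix ι S ℂ) (h : ι → ℂ)

theorem star_dotProduct_dacErrorCov_mulVec (hΦ : (Φα * Φβ).IsDiag) :
    star h ⬝ᵥ dacErrorCov P Φα Φβ F *ᵥ h = P * ∑ i, dacErrorGain Φα Φβ h (F.col i) := by
  rw [dacErrorCov, diag_smul, diagonal_smul, Matrix.mul_smul, smul_mulVec, dotProduct_smul,
    star_dotProduct_mul_diagonal_diag_mul_conjTranspose_mulVec hΦ, smul_eq_mul]
  rfl

theorem star_dotProduct_transmitCov_mulVec (hΦ : (Φα * Φβ).IsDiag) :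
    star h ⬝ᵥ transmitCov P Φα Φβ F *ᵥ h =
      P * (((∑ i, streamGain Φα h (F.col i) : ℝ) : ℂ) + ∑ i, dacErrorGain Φα Φβ h (F.col i)) := by
  rw [transmitCov, add_mulVec, dotProduct_add, star_dotProduct_dacErrorCov_mulVec P F h hΦ,
    Matrix.mul_assoc (Φα * F), ← conjTranspose_mul, smul_mulVec, dotProduct_smul,
    star_dotProduct_mul_conjTranspose_mulVec_eq_sum_normSq, smul_eq_mul, mul_add]
  rfl

theorem quantErrorPower_eq (hΦ : (Φα * Φβ).IsDiag) (α σ2 : ℝ) :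
    quantErrorPower P Φα Φβ F h α σ2 =
      α * P * ∑ i, dacErrorGain Φα Φβ h (F.col i) +
        α * (1 - α) * (P * ((∑ i, streamGain Φα h (F.col i) : ℝ) : ℂ) + σ2) := by
  rw [quantErrorPower, adcErrorPower, star_dotProduct_transmitCov_mulVec P F h hΦ,
    star_dotProduct_dacErrorCov_mulVec P F h hΦ]
  push_cast
  ring

variable {P} [DecidableEq S]

theorem sinr_denominator_eq_mul (hΦ : (Φα * Φβ).IsDiag) (α σ2 : ℝ) (hP : P ≠ 0)
    {common own : S} (hne : common ≠ own) :
    ((P * α ^ 2 * ∑ i ∈ {common, own}ᶜ, streamGain Φα h (F.col i) : ℝ) : ℂ)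
        + quantErrorPower P Φα Φβ F h α σ2 + ((α ^ 2 * σ2 : ℝ) : ℂ) =
      P * α * (((∑ i, streamGain Φα h (F.col i) : ℝ) : ℂ)
        - ((α * (streamGain Φα h (F.col own) + streamGain Φα h (F.col common)) : ℝ) : ℂ)
        + ∑ i, dacErrorGain Φα Φβ h (F.col i) + ((σ2 / P : ℝ) : ℂ)) := by
  have interference : ∑ i ∈ {common, own}ᶜ, streamGain Φα h (F.col i) =
      ∑ i, streamGain Φα h (F.col i)
        - (streamGain Φα h (F.col common) + streamGain Φα h (F.col own)) := by
    rw [← Finset.sum_add_sum_compl {common, own}, Finset.sum_pair hne, add_sub_cancel_left]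
  have noise : (P : ℂ) * ((σ2 / P : ℝ) : ℂ) = σ2 := by
    rw [← Complex.ofReal_mul, mul_div_cancel₀ _ hP]
  rw [quantErrorPower_eq P F h hΦ, interference, mul_add _ _ ((σ2 / P : ℝ) : ℂ),
    mul_right_comm _ _ ((σ2 / P : ℝ) : ℂ), noise]
  push_cast
  ring

theorem private_stream_sinr_reformulation_general (hΦ : (Φα * Φβ).IsDiag) {α : ℝ} (hα : α ≠ 0)
    (σ2 : ℝ) (hP : P ≠ 0) {common own : S} (hne : common ≠ own) :
    ((P * α ^ 2 * streamGain Φα h (F.col own) : ℝ) : ℂ) /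
        (((P * α ^ 2 * ∑ i ∈ {common, own}ᶜ, streamGain Φα h (F.col i) : ℝ) : ℂ)
          + quantErrorPower P Φα Φβ F h α σ2 + ((α ^ 2 * σ2 : ℝ) : ℂ)) =
      ((α * streamGain Φα h (F.col own) : ℝ) : ℂ) /
        (((∑ i, streamGain Φα h (F.col i) : ℝ) : ℂ)
          - ((α * (streamGain Φα h (F.col own) + streamGain Φα h (F.col common)) : ℝ) : ℂ)
          + ∑ i, dacErrorGain Φα Φβ h (F.col i) + ((σ2 / P : ℝ) : ℂ)) := by
  have hPα : (P * α : ℂ) ≠ 0 := mod_cast mul_ne_zero hP hα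
  have numerator : ((P * α ^ 2 * streamGain Φα h (F.col own) : ℝ) : ℂ) =
      P * α * ((α * streamGain Φα h (F.col own) : ℝ) : ℂ) := by
    push_cast
    ring
  rw [numerator, sinr_denominator_eq_mul F h hΦ α σ2 hP hne, mul_div_mul_left _ _ hPα]

end QuantizedReception

/-- The SINR of the private stream at user `k`, defined from the quantized received signal after
SIC of the common stream, equals the reformulated expression `γ_k(F)` of the paper. -/
theorem private_stream_sinr_reformulation
    (N K : ℕ) (hN : 0 < N) (hK : 0 < K)
    (h : Fin K → Fin N → ℂ) (f : Fin (K + 1) → Fin N → ℂ)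
    (F : Matrix (Fin N) (Fin (K + 1)) ℂ) (hF : ∀ n i, F n i = f i n)
    (αD : Fin N → ℝ) (hαD : ∀ n, αD n ∈ Set.Ioc (0 : ℝ) 1)
    (αA : Fin K → ℝ) (hαA : ∀ k, αA k ∈ Set.Ioc (0 : ℝ) 1)
    (βA : Fin K → ℝ) (hβA : ∀ k, βA k = 1 - αA k)
    (P σ2 : ℝ) (hP : 0 < P) (hσ2 : 0 < σ2)
    (Φα Φβ : Matrix (Fin N) (Fin N) ℂ)
    (hΦα : Φα = Matrix.diagonal fun n => (αD n : ℂ))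
    (hΦβ : Φβ = 1 - Φα)
    (RqDAC Cx : Matrix (Fin N) (Fin N) ℂ)
    (hR : RqDAC = Φα * Φβ * diagOf ((P : ℂ) • (F * Fᴴ)))
    (hC : Cx = (P : ℂ) • (Φα * F * Fᴴ * Φαᴴ) + RqDAC)
    (rqADC QE : Fin K → ℂ)
    (hrq : ∀ k, rqADC k = ((αA k * βA k : ℝ) : ℂ) *
      (star (h k) ⬝ᵥ Cx.mulVec (h k) + (σ2 : ℂ)))
    (hQE : ∀ k, QE k = ((αA k ^ 2 : ℝ) : ℂ) *
      (star (h k) ⬝ᵥ RqDAC.mulVec (h k)) + rqADC k) :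
    ∀ k : Fin K,
      ((P * αA k ^ 2 * Complex.normSq (star (h k) ⬝ᵥ Φα.mulVec (f k.succ)) : ℝ) : ℂ) /
          (((P * αA k ^ 2 *
              ∑ i ∈ Finset.univ.erase k,
                Complex.normSq (star (h k) ⬝ᵥ Φα.mulVec (f i.succ)) : ℝ) : ℂ)
            + QE k + ((αA k ^ 2 * σ2 : ℝ) : ℂ)) =
        ((αA k * Complex.normSq (star (h k) ⬝ᵥ Φα.mulVec (f k.succ)) : ℝ) : ℂ) /
          (((∑ i : Fin (K + 1), Complex.normSq (star (h k) ⬝ᵥ Φα.mulVec (f i)) : ℝ) : ℂ)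
            - ((αA k * (Complex.normSq (star (h k) ⬝ᵥ Φα.mulVec (f k.succ))
                + Complex.normSq (star (h k) ⬝ᵥ Φα.mulVec (f 0))) : ℝ) : ℂ)
            + (∑ i : Fin (K + 1),
                star (f i) ⬝ᵥ (Φα * Φβ * diagOf (outer (h k))).mulVec (f i))
            + ((σ2 / P : ℝ) : ℂ)) := by
  intro k
  obtain rfl : f = F.col := funext₂ fun i n => (hF n i).symm
  rw [hQE, hrq, hβA, hC, hR, hΦβ, hΦα,
    sum_erase_succ_eq_sum_compl fun i => Complex.normSq (star (h k) ⬝ᵥ _ *ᵥ F.col i)]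
  exact private_stream_sinr_reformulation_general F (h k)
    (isDiag_mul (isDiag_diagonal _) (isDiag_one.sub (isDiag_diagonal _))) (hαA k).1.ne' σ2 hP.ne'
    (Fin.succ_ne_zero k).symm
end

section
/- (Lemma 1, gradient form.) Let A_{c,1},…,A_{c,K}, B_{c,1},…,B_{c,K}, A_1,…,A_K, B_1,…,B_K be Hermitian positive definite matrices in ℂ^{n×n}, let τ > 0, and define L(w) = −τ·ln(Σ_{k=1}^K r_k(w)^{−1/(τ ln 2)}) + (1/ln 2)·Σ_{k=1}^K ln((w^H A_k w)/(w^H B_k w)) for nonzero w ∈ ℂ^n. Viewing ℂ^n as a real normed vector space, a nonzero w is a critical point of L (the real Fréchet derivative of L at w is the zero functional) if and only if A_KKT(w)·w = λ(w)·B_KKT(w)·w. -/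
open Matrix
open scoped ComplexOrder

/-!
Write the derivative of a positive function `f` at `x` as `f x • g`, with `g` its logarithmic
derivative. Logarithmic derivatives turn quotients into differences, and `log (∑ k, f k ^ p)` has
derivative `p` times the average of the logarithmic derivatives of the `f k`, with weights
proportional to `f k ^ p`. For `p = -1 / (τ * log 2)` the factor `-τ * p` equals `1 / log 2`, the
coefficient of the private part, so the whole gradient of `L` at `w` is `2 / log 2` times
`P w - Q w`, where `P = A_KKT / λ_num` and `Q = B_KKT / λ_den`. Hence `w` is critical iff
`P w = Q w`, and scaling by `λ_num = λ * λ_den ≠ 0` gives the stated equation.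
-/

section LogDeriv

variable {E κ : Type*} [NormedAddCommGroup E] [NormedSpace ℝ E] [Fintype κ]

/-- The power-mean weights of a family of positive reals: the softmax of `p * log (x k)`. With
`p = -1 / (τ * log 2)` and `x k = r_k(w)` these are the `μ_k(w)`. -/
noncomputable def rpowWeight (p : ℝ) (x : κ → ℝ) (k : κ) : ℝ :=
  x k ^ p / ∑ l, x l ^ p

theorem sum_rpow_pos [Nonempty κ] {x : κ → ℝ} (hx : ∀ k, 0 < x k) (p : ℝ) :
    0 < ∑ k, x k ^ p :=
  Finset.sum_pos (fun k _ => Real.rpow_pos_of_pos (hx k) p) Finset.univ_nonempty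

theorem hasFDerivAt_div_of_smul {f h : E → ℝ} {f' h' : E →L[ℝ] ℝ} {x : E}
    (hf : HasFDerivAt f (f x • f') x) (hh : HasFDerivAt h (h x • h') x) (hx : h x ≠ 0) :
    HasFDerivAt (fun y => f y / h y) ((f x / h x) • (f' - h')) x := by
  refine (hf.mul ((hasDerivAt_inv hx).comp_hasFDerivAt x hh)).congr_fderiv ?_
  ext v
  simp only [Function.comp_apply, _root_.add_apply, _root_.sub_apply, _root_.smul_apply,
    smul_eq_mul]
  field_simp
  ring

theorem hasFDerivAt_log_of_smul {f : E → ℝ} {g : E →L[ℝ] ℝ} {x : E}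
    (hf : HasFDerivAt f (f x • g) x) (hx : f x ≠ 0) :
    HasFDerivAt (fun y => Real.log (f y)) g x := by
  simpa only [inv_smul_smul₀ hx] using hf.log hx

theorem hasFDerivAt_log_sum_rpow [Nonempty κ] {f : κ → E → ℝ} {g : κ → E →L[ℝ] ℝ} {x : E}
    (hf : ∀ k, HasFDerivAt (f k) (f k x • g k) x) (hpos : ∀ k, 0 < f k x) (p : ℝ) :
    HasFDerivAt (fun y => Real.log (∑ k, f k y ^ p))
      (p • ∑ k, rpowWeight p (fun l => f l x) k • g k) x := by
  have hrpow : ∀ k, HasFDerivAt (fun y => f k y ^ p) ((p * f k x ^ p) • g k) x := fun k => by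
    refine ((hf k).rpow_const (Or.inl (hpos k).ne')).congr_fderiv ?_
    rw [smul_smul, mul_assoc, Real.rpow_sub_one (hpos k).ne', div_mul_cancel₀ _ (hpos k).ne']
  refine ((HasFDerivAt.fun_sum fun k _ => hrpow k).log (sum_rpow_pos hpos p).ne').congr_fderiv ?_
  simp only [rpowWeight, Finset.smul_sum, smul_smul]
  exact Finset.sum_congr rfl fun k _ => by ring_nf

end LogDeriv

section Rayleigh

variable {𝕜 ι : Type*} [RCLike 𝕜] [Fintype ι]

/-- The real pairing on vectors over `𝕜`: `u` is sent to the functional `h ↦ Re (hᴴ u)`. It plays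
the role of the inner product on `ι → 𝕜`, whose norm is the sup norm, in identifying derivatives
with gradient vectors. -/
noncomputable def rePairing : (ι → 𝕜) →ₗ[ℝ] ((ι → 𝕜) →L[ℝ] ℝ) where
  toFun u := LinearMap.toContinuousLinearMap
    { toFun := fun h => RCLike.re (star h ⬝ᵥ u)
      map_add' := by simp [add_dotProduct]
      map_smul' := by simp [smul_dotProduct, RCLike.smul_re] }
  map_add' u v := by ext h; simp [dotProduct_add]
  map_smul' c u := by ext h; simp [dotProduct_smul, RCLike.smul_re]

theorem rePairing_apply (u h : ι → 𝕜) : rePairing u h = RCLike.re (star h ⬝ᵥ u) := rfl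

theorem rePairing_eq_zero_iff {u : ι → 𝕜} : rePairing u = 0 ↔ u = 0 := by
  refine ⟨fun h => ?_, fun h => by rw [h, map_zero]⟩
  have hre : RCLike.re (star u ⬝ᵥ u) = 0 := by rw [← rePairing_apply, h]; rfl
  by_contra hu
  exact (RCLike.pos_iff.mp (dotProduct_star_self_pos_iff.mpr hu)).1.ne' hre

/-- The quadratic form `vᴴ M v` of a Hermitian matrix, as a real number: the real part discards
an imaginary part that vanishes when `M` is Hermitian. -/
noncomputable def quadForm (M : Matrix ι ι 𝕜) (v : ι → 𝕜) : ℝ :=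
  RCLike.re (star v ⬝ᵥ M *ᵥ v)

/-- The generalized Rayleigh quotient `vᴴ M v / vᴴ N v`. -/
noncomputable def rayleigh (M N : Matrix ι ι 𝕜) (v : ι → 𝕜) : ℝ :=
  quadForm M v / quadForm N v

/-- Half of the logarithmic gradient of `rayleigh M N`, with respect to `rePairing`. -/
noncomputable def rayleighLogGrad (M N : Matrix ι ι 𝕜) (w : ι → 𝕜) : ι → 𝕜 :=
  (quadForm M w)⁻¹ • M *ᵥ w - (quadForm N w)⁻¹ • N *ᵥ w

theorem quadForm_pos {M : Matrix ι ι 𝕜} (hM : M.PosDef) {w : ι → 𝕜} (hw : w ≠ 0) :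
    0 < quadForm M w :=
  hM.re_dotProduct_pos hw

theorem rayleigh_pos {M N : Matrix ι ι 𝕜} (hM : M.PosDef) (hN : N.PosDef) {w : ι → 𝕜}
    (hw : w ≠ 0) : 0 < rayleigh M N w :=
  div_pos (quadForm_pos hM hw) (quadForm_pos hN hw)

theorem re_dotProduct_mulVec_comm {M : Matrix ι ι 𝕜} (hM : M.IsHermitian) (v w : ι → 𝕜) :
    RCLike.re (star v ⬝ᵥ M *ᵥ w) = RCLike.re (star w ⬝ᵥ M *ᵥ v) := by
  have hstar : star (star v ⬝ᵥ M *ᵥ w) = star w ⬝ᵥ M *ᵥ v := by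
    rw [star_dotProduct, star_mulVec, hM.eq, star_star, dotProduct_mulVec]
  rw [← hstar, RCLike.star_def, RCLike.conj_re]

theorem hasFDerivAt_quadForm {M : Matrix ι ι 𝕜} (hM : M.IsHermitian) (w : ι → 𝕜) :
    HasFDerivAt (quadForm M) ((2 : ℝ) • rePairing (M *ᵥ w)) w := by
  let pairMulVec : (ι → 𝕜) →L[ℝ] ((ι → 𝕜) →L[ℝ] ℝ) :=
    LinearMap.toContinuousLinearMap (rePairing ∘ₗ M.mulVecLin.restrictScalars ℝ)
  have hform : HasFDerivAt (fun v => pairMulVec v v) _ w :=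
    pairMulVec.hasFDerivAt.clm_apply (hasFDerivAt_id w)
  refine hform.congr_fderiv ?_
  ext h
  have hsymm : pairMulVec h w = pairMulVec w h := re_dotProduct_mulVec_comm hM w h
  change pairMulVec w h + pairMulVec h w = 2 * pairMulVec w h
  rw [hsymm, two_mul]

theorem hasFDerivAt_rayleigh {M N : Matrix ι ι 𝕜} (hM : M.IsHermitian) (hN : N.IsHermitian)
    {w : ι → 𝕜} (hw : rayleigh M N w ≠ 0) :
    HasFDerivAt (rayleigh M N)
      (rayleigh M N w • (2 : ℝ) • rePairing (rayleighLogGrad M N w)) w := by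
  obtain ⟨hMw, hNw⟩ := div_ne_zero_iff.mp hw
  have hlogDeriv : ∀ {P : Matrix ι ι 𝕜}, P.IsHermitian → quadForm P w ≠ 0 →
      HasFDerivAt (quadForm P)
        (quadForm P w • (quadForm P w)⁻¹ • (2 : ℝ) • rePairing (P *ᵥ w)) w := fun hP hPw => by
    simpa only [smul_inv_smul₀ hPw] using hasFDerivAt_quadForm hP w
  refine (hasFDerivAt_div_of_smul (hlogDeriv hM hMw) (hlogDeriv hN hNw) hNw).congr_fderiv ?_
  rw [rayleigh, rayleighLogGrad, map_sub, map_smul, map_smul]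
  module

end Rayleigh

section SumSpectralEfficiency

variable {𝕜 ι κ : Type*} [RCLike 𝕜] [Fintype ι] [Fintype κ]

/-- The smoothed sum spectral efficiency `L`: the minimum of the common-stream efficiencies is
replaced by a LogSumExp with parameter `τ`, and the private-stream efficiencies are added. -/
noncomputable def smoothedSumSE (τ : ℝ) (Ac Bc A B : κ → Matrix ι ι 𝕜) (v : ι → 𝕜) : ℝ :=
  -τ * Real.log (∑ k, rayleigh (Ac k) (Bc k) v ^ (-(1 / (τ * Real.log 2))))
    + (1 / Real.log 2) * ∑ k, Real.log (rayleigh (A k) (B k) v)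

/-- The weights `μ_k(w)` of the common-stream terms. -/
noncomputable def commonWeight (τ : ℝ) (Ac Bc : κ → Matrix ι ι 𝕜) (w : ι → 𝕜) : κ → ℝ :=
  rpowWeight (-(1 / (τ * Real.log 2))) fun k => rayleigh (Ac k) (Bc k) w

/-- The common shape of the two KKT matrices: `A_KKT(w) / λ_num(w)` for `(Mc, M) = (A_c, A)`, and
`B_KKT(w) / λ_den(w)` for `(Mc, M) = (B_c, B)`, when `μ` is the weight family `μ_k(w)`. -/
noncomputable def kktMatrix (μ : κ → ℝ) (Mc M : κ → Matrix ι ι 𝕜) (w : ι → 𝕜) : Matrix ι ι 𝕜 :=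
  ∑ k, (μ k / quadForm (Mc k) w) • Mc k + ∑ k, (quadForm (M k) w)⁻¹ • M k

theorem kktMatrix_mulVec_sub (μ : κ → ℝ) (Ac Bc A B : κ → Matrix ι ι 𝕜) (w : ι → 𝕜) :
    kktMatrix μ Ac A w *ᵥ w - kktMatrix μ Bc B w *ᵥ w =
      ∑ k, μ k • rayleighLogGrad (Ac k) (Bc k) w + ∑ k, rayleighLogGrad (A k) (B k) w := by
  simp only [kktMatrix, rayleighLogGrad, add_mulVec, sum_mulVec, smul_mulVec, smul_sub, smul_smul,
    Finset.sum_sub_distrib, div_eq_mul_inv]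
  abel

theorem hasFDerivAt_smoothedSumSE [Nonempty κ] {τ : ℝ} (hτ : τ ≠ 0)
    {Ac Bc A B : κ → Matrix ι ι 𝕜}
    (hAc : ∀ k, (Ac k).IsHermitian) (hBc : ∀ k, (Bc k).IsHermitian)
    (hA : ∀ k, (A k).IsHermitian) (hB : ∀ k, (B k).IsHermitian) {w : ι → 𝕜}
    (hcommon : ∀ k, 0 < rayleigh (Ac k) (Bc k) w) (hprivate : ∀ k, 0 < rayleigh (A k) (B k) w) :
    HasFDerivAt (smoothedSumSE τ Ac Bc A B)
      ((2 / Real.log 2) • rePairing (kktMatrix (commonWeight τ Ac Bc w) Ac A w *ᵥ w -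
        kktMatrix (commonWeight τ Ac Bc w) Bc B w *ᵥ w)) w := by
  have hlogSum := hasFDerivAt_log_sum_rpow
    (fun k => hasFDerivAt_rayleigh (hAc k) (hBc k) (hcommon k).ne') hcommon
    (-(1 / (τ * Real.log 2)))
  have hsumLog := HasFDerivAt.fun_sum fun k (_ : k ∈ Finset.univ) => hasFDerivAt_log_of_smul
    (hasFDerivAt_rayleigh (hA k) (hB k) (hprivate k).ne') (hprivate k).ne'
  have hcoeff : -τ * -(1 / (τ * Real.log 2)) = 1 / Real.log 2 := by field_simp
  refine ((hlogSum.const_mul (-τ)).add (hsumLog.const_mul (1 / Real.log 2))).congr_fderiv ?_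
  rw [smul_smul, hcoeff, kktMatrix_mulVec_sub]
  simp only [map_add, map_sum, map_smul, commonWeight, smul_comm (rpowWeight _ _ _) (2 : ℝ),
    ← Finset.smul_sum]
  module

theorem lemma1_gradient_form_general [Nonempty κ] {τ : ℝ} (hτ : τ ≠ 0)
    {Ac Bc A B : κ → Matrix ι ι 𝕜}
    (hAc : ∀ k, (Ac k).IsHermitian) (hBc : ∀ k, (Bc k).IsHermitian)
    (hA : ∀ k, (A k).IsHermitian) (hB : ∀ k, (B k).IsHermitian) {w : ι → 𝕜}
    (hcommon : ∀ k, 0 < rayleigh (Ac k) (Bc k) w) (hprivate : ∀ k, 0 < rayleigh (A k) (B k) w)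
    {num den : ℝ} (hnum : num ≠ 0) (hden : den ≠ 0) :
    fderiv ℝ (smoothedSumSE τ Ac Bc A B) w = 0 ↔
      (num • kktMatrix (commonWeight τ Ac Bc w) Ac A w) *ᵥ w =
        (num / den) • (den • kktMatrix (commonWeight τ Ac Bc w) Bc B w) *ᵥ w := by
  have hlog : Real.log 2 ≠ 0 := (Real.log_pos one_lt_two).ne'
  rw [(hasFDerivAt_smoothedSumSE hτ hAc hBc hA hB hcommon hprivate).fderiv,
    smul_eq_zero_iff_right (div_ne_zero two_ne_zero hlog), rePairing_eq_zero_iff, sub_eq_zero,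
    smul_mulVec, smul_mulVec, smul_smul, div_mul_cancel₀ _ hden, smul_right_inj hnum]

end SumSpectralEfficiency

/-- (Lemma 1, gradient form.) A nonzero `w` is a critical point of the smoothed
sum-spectral-efficiency objective `L` (its real Fréchet derivative at `w` is the zero
functional) iff `A_KKT(w) w = λ(w) B_KKT(w) w`. -/
theorem lemma1_gradient_form
    (n K : ℕ) (hn : 0 < n) (hK : 0 < K)
    (Ac Bc A B : Fin K → Matrix (Fin n) (Fin n) ℂ)
    (hAcH : ∀ k, (Ac k).PosDef) (hBcH : ∀ k, (Bc k).PosDef)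
    (hAH : ∀ k, (A k).PosDef) (hBH : ∀ k, (B k).PosDef)
    (τ : ℝ) (hτ : 0 < τ)
    (L : (Fin n → ℂ) → ℝ)
    (hL : ∀ v, L v =
      -τ * Real.log (∑ k, ((star v ⬝ᵥ (Ac k).mulVec v).re /
          (star v ⬝ᵥ (Bc k).mulVec v).re) ^ (-(1 / (τ * Real.log 2))))
        + (1 / Real.log 2) * ∑ k, Real.log ((star v ⬝ᵥ (A k).mulVec v).re /
            (star v ⬝ᵥ (B k).mulVec v).re))
    (w : Fin n → ℂ) (hw : w ≠ 0)
    (qAc qBc qA qB : Fin K → ℝ)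
    (hqAc : ∀ k, qAc k = (star w ⬝ᵥ (Ac k).mulVec w).re)
    (hqBc : ∀ k, qBc k = (star w ⬝ᵥ (Bc k).mulVec w).re)
    (hqA : ∀ k, qA k = (star w ⬝ᵥ (A k).mulVec w).re)
    (hqB : ∀ k, qB k = (star w ⬝ᵥ (B k).mulVec w).re)
    (r μ : Fin K → ℝ)
    (hr : ∀ k, r k = qAc k / qBc k)
    (hμ : ∀ k, μ k = r k ^ (-(1 / (τ * Real.log 2))) /
      ∑ l, r l ^ (-(1 / (τ * Real.log 2))))
    (lamNum lamDen lam : ℝ)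
    (hlamNum : lamNum = ∏ k, qA k)
    (hlamDen : lamDen =
      ((1 / (K * Real.log 2)) * ∑ k, r k ^ (-(1 / τ))) ^ (τ / Real.log 2) * ∏ k, qB k)
    (hlam : lam = lamNum / lamDen)
    (AKKT BKKT : Matrix (Fin n) (Fin n) ℂ)
    (hAKKT : AKKT = (lamNum : ℂ) •
      (∑ k, ((μ k / qAc k : ℝ) : ℂ) • Ac k + ∑ k, (((qA k)⁻¹ : ℝ) : ℂ) • A k))
    (hBKKT : BKKT = (lamDen : ℂ) •
      (∑ k, ((μ k / qBc k : ℝ) : ℂ) • Bc k + ∑ k, (((qB k)⁻¹ : ℝ) : ℂ) • B k)) :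
    fderiv ℝ L w = 0 ↔ AKKT.mulVec w = (lam : ℂ) • BKKT.mulVec w := by
  have : Nonempty (Fin K) := ⟨⟨0, hK⟩⟩
  simp only [← funext_iff, Complex.coe_smul] at hL hqAc hqBc hqA hqB hr hμ hAKKT hBKKT ⊢
  subst hL hqAc hqBc hqA hqB hr hμ hAKKT hBKKT hlam
  have hcommon k : 0 < rayleigh (Ac k) (Bc k) w := rayleigh_pos (hAcH k) (hBcH k) hw
  have hnum : 0 < lamNum := hlamNum ▸ Finset.prod_pos fun k _ => quadForm_pos (hAH k) hw
  have hden : 0 < lamDen := by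
    have hsum := sum_rpow_pos hcommon (-(1 / τ))
    have hprod : 0 < ∏ k, quadForm (B k) w := Finset.prod_pos fun k _ => quadForm_pos (hBH k) hw
    exact hlamDen ▸ mul_pos (Real.rpow_pos_of_pos (mul_pos (by positivity) hsum) _) hprod
  exact lemma1_gradient_form_general hτ.ne' (fun k => (hAcH k).isHermitian)
    (fun k => (hBcH k).isHermitian) (fun k => (hAH k).isHermitian)
    (fun k => (hBH k).isHermitian) hcommon (fun k => rayleigh_pos (hAH k) (hBH k) hw)
    hnum.ne' hden.ne'
end
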